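/- arXiv:1901.06951 — 2 statements merged into one kernel-verified Lean document; each statement's English description precedes it below -/
import Mathlib

section
/- Assume V ∈ C¹(ℝ^N), c ∈ ℝ, that condition (V^c) holds, and that the coercivity condition (1.7) holds. Then 0 < m_c < +∞. -/
open MeasureTheory Filter Metric Set Topology
open scoped ENNReal

noncomputable section

/-- Euclidean space `ℝ^N`. -/
abbrev Euc (N : ℕ) := EuclideanSpace ℝ (Fin N)

/-- Distance between two subsets of a metric space. -/
def setDist {E : Type*} [PseudoMetricSpace E] (A B : Set E) : ℝ :=
  sInf ((fun p : E × E => dist p.1 p.2) '' (A ×ˢ B))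

/-- `q ∈ H¹_loc(ℝ, ℝ^N)` with derivative `q'`: `q` is locally absolutely continuous with
locally square-integrable derivative `q'`. -/
def IsH1loc {N : ℕ} (q q' : ℝ → Euc N) : Prop :=
  LocallyIntegrable q' volume ∧
  (∀ a b : ℝ, IntegrableOn (fun t => ‖q' t‖ ^ 2) (Icc a b) volume) ∧
  (∀ a b : ℝ, q b - q a = ∫ t in a..b, q' t)

/-- The action `J_{c,I}(q) = ∫_I (½|q̇(t)|² + (V(q(t)) − c)) dt`, valued in `[0,+∞]`. -/
def lagJ {N : ℕ} (V : Euc N → ℝ) (c : ℝ) (q q' : ℝ → Euc N) (I : Set ℝ) : ℝ≥0∞ :=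
  ∫⁻ t in I, ENNReal.ofReal (2⁻¹ * ‖q' t‖ ^ 2 + (V (q t) - c))

/-- The admissible class `Γ_c` of pairs (function, derivative): `q ∈ H¹_loc`,
`V(q(t)) ≥ c` for all `t`, `liminf_{t→−∞} dist(q(t),𝒱⁻) = 0` and
`liminf_{t→+∞} dist(q(t),𝒱⁺) = 0`. -/
def Gamma {N : ℕ} (V : Euc N → ℝ) (c : ℝ) (Vm Vp : Set (Euc N)) :
    Set ((ℝ → Euc N) × (ℝ → Euc N)) :=
  {p | IsH1loc p.1 p.2 ∧ (∀ t, c ≤ V (p.1 t)) ∧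
    (∀ ε > 0, ∃ᶠ t in atBot, infDist (p.1 t) Vm < ε) ∧
    (∀ ε > 0, ∃ᶠ t in atTop, infDist (p.1 t) Vp < ε)}

/-- `m_c := inf_{q ∈ Γ_c} J_c(q)`. -/
def mc {N : ℕ} (V : Euc N → ℝ) (c : ℝ) (Vm Vp : Set (Euc N)) : ℝ≥0∞ :=
  ⨅ (p) (_ : p ∈ Gamma V c Vm Vp), lagJ V c p.1 p.2 univ

/-- Coercivity condition (1.7) for the constant `R`. -/
def Coercive {N : ℕ} (V : Euc N → ℝ) (c : ℝ) (Vm Vp : Set (Euc N)) (R : ℝ) : Prop :=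
  mc V c Vm Vp =
    ⨅ (p) (_ : p ∈ Gamma V c Vm Vp) (_ : ∀ t, ‖p.1 t‖ ≤ R), lagJ V c p.1 p.2 univ

/-!
Positivity: a path in `Γ_c` must cross from the `d/3`-neighbourhood of `𝒱₋` to that of `𝒱₊`, where
`d = dist(𝒱₋, 𝒱₊)`, and the crossing has length at least `d/3`. If the path stays in a fixed
ball, then compactness gives `V - c ≥ μ > 0` during the crossing, so
`½|q̇|² + (V - c) ≥ √(2μ) |q̇|` bounds the action from below by `√(2μ) d/3`. Coercivity says that
such bounded paths suffice to compute `m_c`.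

Finiteness: on a line segment from `𝒱₋` to `𝒱₊`, keep the piece that ends at the first entrance
into `𝒱₊` and starts at the last visit to `𝒱₋` before it. There `V ≥ c`, with equality at both ends,
so running along this piece in unit time and resting at its ends is an admissible path whose
action density vanishes outside a compact time interval.
-/

section Crossing

variable {α β : Type*} [LinearOrder α] [TopologicalSpace α] [OrderTopology α] [CompactIccSpace α]

theorem exists_le_forall_mem_Ioo_notMem {A B : Set α} (hA : IsClosed A) (hB : IsClosed B)
    {s u : α} (hsu : s ≤ u) (hs : s ∈ A) (hu : u ∈ B) :
    ∃ a ∈ A, ∃ b ∈ B, a ≤ b ∧ ∀ t ∈ Ioo a b, t ∉ A ∧ t ∉ B := by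
  obtain ⟨b, ⟨hb, hbB⟩, hb_least⟩ :=
    (isCompact_Icc.inter_right hB).exists_isLeast ⟨u, ⟨hsu, le_rfl⟩, hu⟩
  obtain ⟨a, ⟨ha, haA⟩, ha_greatest⟩ :=
    (isCompact_Icc.inter_right hA).exists_isGreatest ⟨s, ⟨le_rfl, hb.1⟩, hs⟩
  refine ⟨a, haA, b, hbB, ha.2, fun t ht => ⟨fun htA => ?_, fun htB => ?_⟩⟩
  · exact ht.1.not_ge (ha_greatest ⟨⟨ha.1.trans ht.1.le, ht.2.le⟩, htA⟩)
  · exact ht.2.not_ge (hb_least ⟨⟨ha.1.trans ht.1.le, ht.2.le.trans hb.2⟩, htB⟩)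

theorem exists_crossing_of_frequently_lt [LinearOrder β] [TopologicalSpace β]
    [OrderClosedTopology β] {f g : α → β} (hf : Continuous f) (hg : Continuous g) {δ : β}
    (hf_bot : ∃ᶠ t in atBot, f t < δ) (hg_top : ∃ᶠ t in atTop, g t < δ) :
    ∃ a b, a ≤ b ∧ f a ≤ δ ∧ g b ≤ δ ∧ ∀ t ∈ Ioo a b, δ < f t ∧ δ < g t := by
  obtain ⟨s, hs⟩ := hf_bot.exists
  obtain ⟨u, hu, hsu⟩ := (hg_top.and_eventually (eventually_ge_atTop s)).exists
  obtain ⟨a, ha, b, hb, hab, hgap⟩ := exists_le_forall_mem_Ioo_notMem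
    (isClosed_le hf continuous_const) (isClosed_le hg continuous_const) hsu hs.le hu.le
  exact ⟨a, b, hab, ha, hb, fun t ht => ⟨not_le.1 (hgap t ht).1, not_le.1 (hgap t ht).2⟩⟩

end Crossing

section SetDist

variable {X : Type*} [PseudoMetricSpace X] {A B : Set X}

theorem setDist_le_dist {x y : X} (hx : x ∈ A) (hy : y ∈ B) : setDist A B ≤ dist x y :=
  csInf_le ⟨0, by rintro _ ⟨p, -, rfl⟩; exact dist_nonneg⟩ ⟨(x, y), ⟨hx, hy⟩, rfl⟩

theorem nonempty_of_setDist_pos (h : 0 < setDist A B) : A.Nonempty ∧ B.Nonempty := by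
  rw [← prod_nonempty_iff, nonempty_iff_ne_empty]
  intro hempty
  simp [setDist, hempty] at h

theorem disjoint_of_setDist_pos (h : 0 < setDist A B) : Disjoint A B :=
  disjoint_left.2 fun x hxA hxB =>
    h.not_ge ((setDist_le_dist hxA hxB).trans_eq (dist_self x))

theorem setDist_le_infDist_add_infDist (hA : A.Nonempty) (hB : B.Nonempty) (x : X) :
    setDist A B ≤ infDist x A + infDist x B := by
  suffices setDist A B - infDist x B ≤ infDist x A by linarith
  refine (le_infDist hA).2 fun y hy => ?_
  have hyB : setDist A B ≤ infDist y B := (le_infDist hB).2 fun z hz => setDist_le_dist hy hz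
  have : infDist y B ≤ infDist x B + dist y x := infDist_le_infDist_add_dist
  rw [dist_comm x y]
  linarith

theorem le_dist_of_infDist_le_third (h : 0 < setDist A B) {x y : X}
    (hx : infDist x A ≤ setDist A B / 3) (hy : infDist y B ≤ setDist A B / 3) :
    setDist A B / 3 ≤ dist x y := by
  obtain ⟨hA, hB⟩ := nonempty_of_setDist_pos h
  have hxAB : setDist A B ≤ infDist x A + infDist x B := setDist_le_infDist_add_infDist hA hB x
  have hxy : infDist x B ≤ infDist y B + dist x y := infDist_le_infDist_add_dist
  linarith

theorem exists_pos_le_sub_of_le_infDist [ProperSpace X] {V : X → ℝ} (hV : Continuous V) {c : ℝ}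
    (hsub : {x | V x ≤ c} ⊆ A ∪ B) {δ : ℝ} (hδ : 0 < δ) (x₀ : X) (R : ℝ) :
    ∃ μ > 0, ∀ x ∈ closedBall x₀ R, δ ≤ infDist x A → δ ≤ infDist x B → μ ≤ V x - c := by
  have hK : IsCompact (closedBall x₀ R ∩ {x | δ ≤ infDist x A ∧ δ ≤ infDist x B}) :=
    (isCompact_closedBall x₀ R).inter_right <|
      (isClosed_le continuous_const (continuous_infDist_pt A)).inter
        (isClosed_le continuous_const (continuous_infDist_pt B))
  have hpos : ∀ x ∈ closedBall x₀ R ∩ {x | δ ≤ infDist x A ∧ δ ≤ infDist x B},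
      0 < V x - c := by
    rintro x ⟨-, hxA, hxB⟩
    by_contra! hx
    rcases hsub (sub_nonpos.1 hx) with h | h
    · exact hδ.not_ge (hxA.trans_eq (infDist_zero_of_mem h))
    · exact hδ.not_ge (hxB.trans_eq (infDist_zero_of_mem h))
  obtain ⟨μ, hμ, hle⟩ := hK.exists_forall_le' (hV.sub continuous_const).continuousOn hpos
  exact ⟨μ, hμ, fun x hx hxA hxB => hle x ⟨hx, hxA, hxB⟩⟩

end SetDist

section LowerBound

variable {N : ℕ} {q q' : ℝ → Euc N} {V : Euc N → ℝ} {c : ℝ} {Vm Vp : Set (Euc N)}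

theorem IsH1loc.continuous (h : IsH1loc q q') : Continuous q := by
  have hq : q = fun t => q 0 + ∫ s in (0 : ℝ)..t, q' s := by
    ext1 t
    rw [← h.2.2 0 t, add_sub_cancel]
  rw [hq]
  exact continuous_const.add <| intervalIntegral.continuous_primitive
    (fun _ _ => (h.1.integrableOn_isCompact isCompact_uIcc).intervalIntegrable) 0

theorem IsH1loc.edist_le_lintegral_enorm (h : IsH1loc q q') {a b : ℝ} (hab : a ≤ b) :
    edist (q a) (q b) ≤ ∫⁻ t in Ioo a b, ‖q' t‖ₑ := by
  rw [edist_comm, edist_eq_enorm_sub, h.2.2 a b, intervalIntegral.integral_of_le hab,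
    integral_Ioc_eq_integral_Ioo]
  exact enorm_integral_le_lintegral_enorm _

theorem sqrt_two_mul_mul_le {μ : ℝ} (hμ : 0 ≤ μ) (r : ℝ) : √(2 * μ) * r ≤ 2⁻¹ * r ^ 2 + μ := by
  have hsq : √(2 * μ) ^ 2 = 2 * μ := Real.sq_sqrt (by positivity)
  linarith [two_mul_le_add_sq (√(2 * μ)) r]

theorem IsH1loc.sqrt_mul_edist_le_lagJ (h : IsH1loc q q') {a b : ℝ} (hab : a ≤ b) {μ : ℝ}
    (hμ : 0 ≤ μ) (hV : ∀ t ∈ Ioo a b, μ ≤ V (q t) - c) :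
    ENNReal.ofReal √(2 * μ) * edist (q a) (q b) ≤ lagJ V c q q' (Ioo a b) := by
  calc ENNReal.ofReal √(2 * μ) * edist (q a) (q b)
      ≤ ENNReal.ofReal √(2 * μ) * ∫⁻ t in Ioo a b, ‖q' t‖ₑ := by
        gcongr
        exact h.edist_le_lintegral_enorm hab
    _ = ∫⁻ t in Ioo a b, ENNReal.ofReal √(2 * μ) * ‖q' t‖ₑ :=
        (lintegral_const_mul' _ _ ENNReal.ofReal_ne_top).symm
    _ ≤ lagJ V c q q' (Ioo a b) := by
        refine setLIntegral_mono' measurableSet_Ioo fun t ht => ?_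
        rw [← ofReal_norm, ← ENNReal.ofReal_mul (Real.sqrt_nonneg _)]
        refine ENNReal.ofReal_le_ofReal ((sqrt_two_mul_mul_le hμ ‖q' t‖).trans ?_)
        gcongr
        exact hV t ht

theorem sqrt_mul_le_lagJ_of_mem_Gamma (hsep : 0 < setDist Vm Vp) (hq : (q, q') ∈ Gamma V c Vm Vp)
    {μ : ℝ} (hμ : 0 ≤ μ)
    (hV : ∀ t, setDist Vm Vp / 3 ≤ infDist (q t) Vm → setDist Vm Vp / 3 ≤ infDist (q t) Vp →
      μ ≤ V (q t) - c) :
    ENNReal.ofReal √(2 * μ) * ENNReal.ofReal (setDist Vm Vp / 3) ≤ lagJ V c q q' univ := by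
  obtain ⟨hH1, -, hbot, htop⟩ := hq
  have hthird : 0 < setDist Vm Vp / 3 := by positivity
  obtain ⟨a, b, hab, ha, hb, hgap⟩ := exists_crossing_of_frequently_lt
    ((continuous_infDist_pt Vm).comp hH1.continuous)
    ((continuous_infDist_pt Vp).comp hH1.continuous) (hbot _ hthird) (htop _ hthird)
  calc ENNReal.ofReal √(2 * μ) * ENNReal.ofReal (setDist Vm Vp / 3)
      ≤ ENNReal.ofReal √(2 * μ) * edist (q a) (q b) := by
        rw [edist_dist]
        gcongr
        exact le_dist_of_infDist_le_third hsep ha hb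
    _ ≤ lagJ V c q q' (Ioo a b) :=
        hH1.sqrt_mul_edist_le_lagJ hab hμ fun t ht => hV t (hgap t ht).1.le (hgap t ht).2.le
    _ ≤ lagJ V c q q' univ := lintegral_mono_set (subset_univ _)

theorem mc_pos_of_coercive (hV : Continuous V) (hsub : {x | V x ≤ c} ⊆ Vm ∪ Vp)
    (hsep : 0 < setDist Vm Vp) {R : ℝ} (hcoer : Coercive V c Vm Vp R) : 0 < mc V c Vm Vp := by
  obtain ⟨μ, hμ, hbarrier⟩ := exists_pos_le_sub_of_le_infDist hV hsub (δ := setDist Vm Vp / 3)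
    (by positivity) 0 R
  calc 0 < ENNReal.ofReal √(2 * μ) * ENNReal.ofReal (setDist Vm Vp / 3) :=
        ENNReal.mul_pos (ENNReal.ofReal_pos.2 (by positivity)).ne'
          (ENNReal.ofReal_pos.2 (by positivity)).ne'
    _ ≤ ⨅ (p) (_ : p ∈ Gamma V c Vm Vp) (_ : ∀ t, ‖p.1 t‖ ≤ R), lagJ V c p.1 p.2 univ :=
        le_iInf₂ fun _ hp => le_iInf fun hbound => sqrt_mul_le_lagJ_of_mem_Gamma hsep hp hμ.le
          fun t => hbarrier _ (mem_closedBall_zero_iff.2 (hbound t))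
    _ = mc V c Vm Vp := hcoer.symm

end LowerBound

section Segment

variable {E : Type*} [AddCommGroup E] [Module ℝ E] [TopologicalSpace E]
  [IsTopologicalAddGroup E] [ContinuousSMul ℝ E]

theorem exists_openSegment_disjoint {A B : Set E} (hA : IsClosed A) (hB : IsClosed B)
    (hAB : Disjoint A B) (hA_ne : A.Nonempty) (hB_ne : B.Nonempty) :
    ∃ x ∈ A, ∃ y ∈ B, Disjoint (openSegment ℝ x y) (A ∪ B) := by
  obtain ⟨x, hx⟩ := hA_ne
  obtain ⟨y, hy⟩ := hB_ne
  let line : ℝ →ᵃ[ℝ] E := AffineMap.lineMap x y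
  have hline : Continuous line := AffineMap.lineMap_continuous
  obtain ⟨a, ha, b, hb, hab, hgap⟩ := exists_le_forall_mem_Ioo_notMem (hA.preimage hline)
    (hB.preimage hline) zero_le_one (by simpa [line] using hx) (by simpa [line] using hy)
  have hlt : a < b := by
    refine hab.lt_of_ne ?_
    rintro rfl
    exact disjoint_left.1 hAB ha hb
  refine ⟨line a, ha, line b, hb, ?_⟩
  rw [← image_openSegment, openSegment_eq_Ioo hlt, disjoint_left]
  rintro _ ⟨t, ht, rfl⟩ (h | h)
  exacts [(hgap t ht).1 h, (hgap t ht).2 h]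

theorem le_of_mem_segment_of_disjoint [T2Space E] {V : E → ℝ} (hV : Continuous V) {c : ℝ} {x y : E}
    (h : Disjoint (openSegment ℝ x y) {z | V z ≤ c}) {z : E} (hz : z ∈ segment ℝ x y) :
    c ≤ V z := by
  rw [← closure_openSegment] at hz
  exact closure_minimal (fun w hw => (not_le.1 (disjoint_left.1 h hw)).le)
    (isClosed_le continuous_const hV) hz

end Segment

theorem intervalIntegral_indicator_Ioc_const {E : Type*} [NormedAddCommGroup E] [NormedSpace ℝ E]
    [CompleteSpace E] {a b : ℝ} (hab : a ≤ b) (v : E) (s u : ℝ) :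
    ∫ t in s..u, (Ioc a b).indicator (fun _ => v) t =
      ((projIcc a b hab u : ℝ) - projIcc a b hab s) • v := by
  wlog hsu : s ≤ u generalizing s u
  · rw [intervalIntegral.integral_symm, this u s (le_of_not_ge hsu), ← neg_smul, neg_sub]
  rw [intervalIntegral.integral_of_le hsu, setIntegral_indicator measurableSet_Ioc, Ioc_inter_Ioc,
    setIntegral_const, Real.volume_real_Ioc, coe_projIcc, coe_projIcc]
  grind

section UpperBound

variable {N : ℕ} {V : Euc N → ℝ} {c : ℝ} {Vm Vp : Set (Euc N)} {x y : Euc N}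

/-- The path that rests at `x` until time `0`, runs along the segment to `y` with constant velocity
during `[0, 1]` and rests at `y` afterwards. It is the competitor that shows `m_c < +∞`. -/
def segmentPath (x y : Euc N) (t : ℝ) : Euc N :=
  AffineMap.lineMap x y (projIcc (0 : ℝ) 1 zero_le_one t : ℝ)

/-- The velocity of `segmentPath x y`. At the corner times `0` and `1`, where the path has no
derivative, the values are chosen so that the velocity is supported in `(0, 1]`. -/
def segmentVelocity (x y : Euc N) : ℝ → Euc N :=
  (Ioc 0 1).indicator fun _ => y - x

theorem continuous_segmentPath (x y : Euc N) : Continuous (segmentPath x y) :=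
  AffineMap.lineMap_continuous.comp (continuous_subtype_val.comp continuous_projIcc)

theorem segmentPath_mem_segment (x y : Euc N) (t : ℝ) : segmentPath x y t ∈ segment ℝ x y := by
  rw [segment_eq_image_lineMap]
  exact mem_image_of_mem _ (projIcc (0 : ℝ) 1 zero_le_one t).2

theorem segmentPath_of_nonpos {t : ℝ} (ht : t ≤ 0) : segmentPath x y t = x := by
  simp [segmentPath, projIcc_of_le_left zero_le_one ht]

theorem segmentPath_of_one_le {t : ℝ} (ht : 1 ≤ t) : segmentPath x y t = y := by
  simp [segmentPath, projIcc_of_right_le zero_le_one ht]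

theorem segmentVelocity_of_mem {t : ℝ} (ht : t ∈ Ioc 0 1) : segmentVelocity x y t = y - x :=
  indicator_of_mem ht _

theorem segmentVelocity_of_notMem {t : ℝ} (ht : t ∉ Ioc 0 1) : segmentVelocity x y t = 0 :=
  indicator_of_notMem ht _

theorem isH1loc_segmentPath (x y : Euc N) : IsH1loc (segmentPath x y) (segmentVelocity x y) := by
  have hmem (p : ℝ≥0∞) : MemLp (segmentVelocity x y) p :=
    memLp_indicator_const p measurableSet_Ioc (y - x) (Or.inr measure_Ioc_lt_top.ne)
  refine ⟨(memLp_one_iff_integrable.1 (hmem 1)).locallyIntegrable,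
    fun a b => ((hmem 2).integrable_norm_pow two_ne_zero).integrableOn, fun a b => ?_⟩
  simp only [segmentVelocity, intervalIntegral_indicator_Ioc_const zero_le_one, segmentPath,
    AffineMap.lineMap_apply_module', add_sub_add_right_eq_sub, sub_smul]

theorem segmentPath_mem_Gamma (hx : x ∈ Vm) (hy : y ∈ Vp) (hV : ∀ z ∈ segment ℝ x y, c ≤ V z) :
    (segmentPath x y, segmentVelocity x y) ∈ Gamma V c Vm Vp := by
  refine ⟨isH1loc_segmentPath x y, fun t => hV _ (segmentPath_mem_segment x y t),
    fun ε hε => Eventually.frequently ?_, fun ε hε => Eventually.frequently ?_⟩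
  · filter_upwards [eventually_le_atBot 0] with t ht
    rwa [segmentPath_of_nonpos ht, infDist_zero_of_mem hx]
  · filter_upwards [eventually_ge_atTop 1] with t ht
    rwa [segmentPath_of_one_le ht, infDist_zero_of_mem hy]

theorem lagJ_segmentPath_lt_top (hV : Continuous V) (hx : V x = c) (hy : V y = c) :
    lagJ V c (segmentPath x y) (segmentVelocity x y) univ < ⊤ := by
  have hrest (t : ℝ) (ht : t ∉ Ioc 0 1) : V (segmentPath x y t) = c := by
    rcases le_or_gt t 0 with h0 | h0
    · rw [segmentPath_of_nonpos h0, hx]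
    · rw [segmentPath_of_one_le (not_le.1 fun h1 => ht ⟨h0, h1⟩).le, hy]
  have hsupp : (Function.support fun t => ENNReal.ofReal
      (2⁻¹ * ‖segmentVelocity x y t‖ ^ 2 + (V (segmentPath x y t) - c))) ⊆ Ioc 0 1 := by
    refine Function.support_subset_iff'.2 fun t ht => ?_
    simp [segmentVelocity_of_notMem ht, hrest t ht]
  have hint : IntegrableOn (fun t => 2⁻¹ * ‖y - x‖ ^ 2 + (V (segmentPath x y t) - c))
      (Ioc (0 : ℝ) 1) :=
    (continuous_const.add
      ((hV.comp (continuous_segmentPath x y)).sub continuous_const)).integrableOn_Ioc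
  rw [lagJ, Measure.restrict_univ, ← setLIntegral_eq_of_support_subset hsupp,
    setLIntegral_congr_fun measurableSet_Ioc fun t ht => by rw [segmentVelocity_of_mem ht]]
  exact hint.setLIntegral_lt_top

theorem mc_lt_top (hV : Continuous V) (hVm : IsClosed Vm) (hVp : IsClosed Vp)
    (hsplit : {x | V x ≤ c} = Vm ∪ Vp) (hdisj : Disjoint Vm Vp) (hVm_ne : Vm.Nonempty)
    (hVp_ne : Vp.Nonempty) : mc V c Vm Vp < ⊤ := by
  obtain ⟨x, hx, y, hy, hxy⟩ := exists_openSegment_disjoint hVm hVp hdisj hVm_ne hVp_ne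
  rw [← hsplit] at hxy
  have hge : ∀ z ∈ segment ℝ x y, c ≤ V z := fun z => le_of_mem_segment_of_disjoint hV hxy
  have hle : Vm ∪ Vp ⊆ {z | V z ≤ c} := hsplit.ge
  have hVx : V x = c := (hle (Or.inl hx)).antisymm (hge x (left_mem_segment ℝ x y))
  have hVy : V y = c := (hle (Or.inr hy)).antisymm (hge y (right_mem_segment ℝ x y))
  exact (iInf₂_le _ (segmentPath_mem_Gamma hx hy hge)).trans_lt
    (lagJ_segmentPath_lt_top hV hVx hVy)

end UpperBound

theorem mc_pos_and_finite_general {N : ℕ} {V : Euc N → ℝ} (hV : Continuous V) {c : ℝ}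
    {Vm Vp : Set (Euc N)} (hVm : IsClosed Vm) (hVp : IsClosed Vp)
    (hsplit : {x | V x ≤ c} = Vm ∪ Vp) (hsep : 0 < setDist Vm Vp)
    (hcoer : ∃ R, Coercive V c Vm Vp R) : 0 < mc V c Vm Vp ∧ mc V c Vm Vp < ⊤ := by
  obtain ⟨R, hR⟩ := hcoer
  obtain ⟨hVm_ne, hVp_ne⟩ := nonempty_of_setDist_pos hsep
  exact ⟨mc_pos_of_coercive hV hsplit.le hsep hR,
    mc_lt_top hV hVm hVp hsplit (disjoint_of_setDist_pos hsep) hVm_ne hVp_ne⟩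

/-- Lemma 2.1: under (V^c) and coercivity (1.7), `0 < m_c < +∞`. -/
theorem mc_pos_and_finite {N : ℕ} (hN : 0 < N) (V : Euc N → ℝ) (hV : ContDiff ℝ 1 V)
    (c : ℝ) (Vm Vp : Set (Euc N)) (hVm : IsClosed Vm) (hVp : IsClosed Vp)
    (hsplit : {x | V x ≤ c} = Vm ∪ Vp) (hsep : 0 < setDist Vm Vp)
    (hcoer : ∃ R > 0, Coercive V c Vm Vp R) :
    0 < mc V c Vm Vp ∧ mc V c Vm Vp < ⊤ :=
  mc_pos_and_finite_general hV.continuous hVm hVp hsplit hsep (hcoer.imp fun _ => And.right)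
end
end

section
/- Assume V ∈ C¹(ℝ^N), c ∈ ℝ, and that condition (V^c) holds. If q ∈ Γ_c satisfies ‖q‖_{L^∞(ℝ,ℝ^N)} < +∞ and J_c(q) < +∞, then lim_{t→−∞} dist(q(t), 𝒱^c₋) = 0 and lim_{t→+∞} dist(q(t), 𝒱^c₊) = 0. -/
open MeasureTheory Filter Metric Set Topology
open scoped ENNReal

noncomputable section

/-!
On a shell `{α ≤ dist(·, 𝒱₊) ≤ β}` with `0 < α < β < dist(𝒱₋, 𝒱₊)`, intersected with a compact set
containing the curve, `V - c` is bounded below by some `η > 0`. Since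
`½|q̇|² + (V(q) - c) ≥ ½|q̇|² + η ≥ √(2η) |q̇|` there, every crossing of the shell costs action at
least `√(2η) (β - α)`. The action is a finite measure on the time axis, hence tight, so no crossing
can take place near `±∞`: a curve that returns below distance `α` at arbitrarily late times
eventually stays below distance `β`.
-/

section Crossing

variable {ι δ : Type*} [ConditionallyCompleteLinearOrder ι] [TopologicalSpace ι] [OrderTopology ι]
  [DenselyOrdered ι] [LinearOrder δ] [TopologicalSpace δ] [OrderClosedTopology δ]
  {g : ι → δ} {s t : ι} {α β : δ}

lemma exists_first_eq_of_continuousOn (hg : ContinuousOn g (Icc s t)) (hst : s ≤ t)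
    (hs : g s ≤ β) (ht : β ≤ g t) :
    ∃ b ∈ Icc s t, g b = β ∧ ∀ τ ∈ Icc s b, g τ ≤ β := by
  have hcompact : IsCompact (Icc s t ∩ g ⁻¹' {β}) :=
    isCompact_Icc.of_isClosed_subset (hg.preimage_isClosed_of_isClosed isClosed_Icc
      isClosed_singleton) inter_subset_left
  obtain ⟨b, ⟨hb, hgb⟩, hleast⟩ :=
    hcompact.exists_isLeast (intermediate_value_Icc hst hg ⟨hs, ht⟩)
  refine ⟨b, hb, hgb, fun τ hτ ↦ ?_⟩
  by_contra! hgτ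
  have hsub : Icc s τ ⊆ Icc s t := Icc_subset_Icc_right (hτ.2.trans hb.2)
  obtain ⟨σ, hσ, hgσ⟩ := intermediate_value_Icc hτ.1 (hg.mono hsub) ⟨hs, hgτ.le⟩
  have hτb : τ = b := hτ.2.antisymm ((hleast ⟨hsub hσ, hgσ⟩).trans hσ.2)
  exact hgτ.ne' (hτb ▸ hgb)

lemma exists_last_eq_of_continuousOn (hg : ContinuousOn g (Icc s t)) (hst : s ≤ t)
    (hs : g s ≤ α) (ht : α ≤ g t) :
    ∃ a ∈ Icc s t, g a = α ∧ ∀ τ ∈ Icc a t, α ≤ g τ := by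
  obtain ⟨a, ha, hga, hle⟩ := exists_first_eq_of_continuousOn (ι := ιᵒᵈ) (δ := δᵒᵈ)
    (g := OrderDual.toDual ∘ g ∘ OrderDual.ofDual) (s := OrderDual.toDual t)
    (t := OrderDual.toDual s) (β := OrderDual.toDual α) (by rwa [Icc_toDual]) hst ht hs
  exact ⟨OrderDual.ofDual a, ha.symm, hga, fun τ hτ ↦ hle _ hτ.symm⟩

lemma exists_mapsTo_Icc_of_continuousOn_Icc (hg : ContinuousOn g (Icc s t)) (hst : s ≤ t)
    (hs : g s ≤ α) (hαβ : α ≤ β) (ht : β ≤ g t) :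
    ∃ a b, uIcc a b ⊆ Icc s t ∧ g a = α ∧ g b = β ∧ MapsTo g (uIcc a b) (Icc α β) := by
  obtain ⟨b, hb, hgb, hle⟩ := exists_first_eq_of_continuousOn hg hst (hs.trans hαβ) ht
  obtain ⟨a, ha, hga, hge⟩ := exists_last_eq_of_continuousOn
    (hg.mono (Icc_subset_Icc_right hb.2)) hb.1 hs (hαβ.trans hgb.ge)
  refine ⟨a, b, ?_, hga, hgb, ?_⟩ <;> rw [uIcc_of_le ha.2]
  · exact Icc_subset_Icc ha.1 hb.2
  · exact fun τ hτ ↦ ⟨hge τ hτ, hle τ ⟨ha.1.trans hτ.1, hτ.2⟩⟩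

lemma exists_mapsTo_Icc_of_continuousOn_uIcc (hg : ContinuousOn g (uIcc s t))
    (hs : g s ≤ α) (hαβ : α ≤ β) (ht : β ≤ g t) :
    ∃ a b, uIcc a b ⊆ uIcc s t ∧ g a = α ∧ g b = β ∧ MapsTo g (uIcc a b) (Icc α β) := by
  rcases le_total s t with hst | hts
  · rw [uIcc_of_le hst] at hg ⊢
    exact exists_mapsTo_Icc_of_continuousOn_Icc hg hst hs hαβ ht
  · rw [uIcc_of_ge hts] at hg ⊢
    obtain ⟨b, a, hsub, hgb, hga, hmaps⟩ := exists_mapsTo_Icc_of_continuousOn_Icc (δ := δᵒᵈ)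
      (g := OrderDual.toDual ∘ g) hg hts ht hαβ hs
    rw [uIcc_comm] at hsub hmaps
    exact ⟨a, b, hsub, hga, hgb, fun τ hτ ↦ (hmaps hτ).symm⟩

lemma eventually_lt_of_le_measure_crossing [TopologicalSpace.IsCompletelyPseudoMetrizableSpace ι]
    [SecondCountableTopology ι] [MeasurableSpace ι] [BorelSpace ι] {μ : Measure ι}
    [IsFiniteMeasure μ] {l : Filter ι} [TendstoIxxClass Icc l l] (hl : l ≤ cocompact ι)
    (hg : Continuous g) (hαβ : α ≤ β) {κ : ℝ≥0∞} (hκ : 0 < κ) {S : Set ι} (hS : S ∈ l)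
    (hcross : ∀ a b, uIcc a b ⊆ S → g a = α → g b = β → MapsTo g (uIcc a b) (Icc α β) →
      κ ≤ μ (uIcc a b))
    (hfreq : ∃ᶠ t in l, g t ≤ α) : ∀ᶠ t in l, g t < β := by
  have hμ : Tendsto μ l.smallSets (𝓝 0) := by
    have htight : IsTightMeasureSet {μ} := isTightMeasureSet_singleton
    simp only [IsTightMeasureSet, iSup_singleton] at htight
    exact htight.mono_left (monotone_smallSets hl)
  have hsmall : ∀ᶠ I in l.smallSets, μ I < κ ∧ I ⊆ S :=
    (hμ.eventually_lt_const hκ).and (eventually_smallSets_subset.2 hS)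
  have hIcc : ∀ᶠ s in l, ∀ᶠ t in l, μ (uIcc s t) < κ ∧ uIcc s t ⊆ S :=
    ((tendsto_fst.uIcc tendsto_snd).eventually hsmall).curry
  obtain ⟨s, hs, hst⟩ := (hfreq.and_eventually hIcc).exists
  filter_upwards [hst] with t ⟨hlt, hsub⟩
  by_contra! ht
  obtain ⟨a, b, hab, hga, hgb, hmaps⟩ :=
    exists_mapsTo_Icc_of_continuousOn_uIcc hg.continuousOn hs hαβ ht
  exact (hcross a b (hab.trans hsub) hga hgb hmaps).not_gt ((measure_mono hab).trans_lt hlt)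

end Crossing

lemma exists_pos_add_le_of_lowerSemicontinuousOn {X : Type*} [TopologicalSpace X] {V : X → ℝ}
    {K : Set X} (hV : LowerSemicontinuousOn V K) (hK : IsCompact K) {c : ℝ}
    (hc : ∀ x ∈ K, c < V x) : ∃ η > 0, ∀ x ∈ K, c + η ≤ V x := by
  rcases K.eq_empty_or_nonempty with rfl | hne
  · exact ⟨1, one_pos, by simp⟩
  · obtain ⟨x₀, hx₀, hmin⟩ := hV.exists_isMinOn hne hK
    exact ⟨V x₀ - c, sub_pos.2 (hc x₀ hx₀), fun x hx ↦ by simpa using hmin hx⟩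

section SetDist

variable {X : Type*} [PseudoMetricSpace X] {A B : Set X}

lemma setDist_comm (A B : Set X) : setDist A B = setDist B A := by
  rw [setDist, setDist, ← image_swap_prod, image_image]
  simp only [Prod.fst_swap, Prod.snd_swap, dist_comm]

lemma nonempty_left_of_setDist_pos (h : 0 < setDist A B) : A.Nonempty := by
  by_contra! hA
  simp [setDist, hA] at h

lemma setDist_le_infDist (hA : A.Nonempty) {y : X} (hy : y ∈ B) : setDist A B ≤ infDist y A :=
  (le_infDist hA).2 fun {x} hx ↦ csInf_le ⟨0, forall_mem_image.2 fun _ _ ↦ dist_nonneg⟩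
    ⟨(x, y), ⟨hx, hy⟩, dist_comm x y⟩

lemma lt_of_infDist_mem_Icc {V : X → ℝ} {c ε ε' : ℝ} (hAB : {x | V x ≤ c} ⊆ A ∪ B) (hε : 0 < ε)
    (hε' : ε' < setDist A B) {x : X} (hx : infDist x A ∈ Icc ε ε') : c < V x := by
  by_contra! hVx
  rcases hAB hVx with hxA | hxB
  · exact (hε.trans_le hx.1).ne' (infDist_zero_of_mem hxA)
  · have hsep : 0 < setDist A B := (hε.trans_le (hx.1.trans hx.2)).trans hε'
    exact (setDist_le_infDist (nonempty_left_of_setDist_pos hsep) hxB).not_gt (hx.2.trans_lt hε')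

lemma exists_pos_add_le_of_infDist_mem_Icc {V : X → ℝ} {K : Set X} (hK : IsCompact K)
    (hV : LowerSemicontinuousOn V K) {c ε ε' : ℝ} (hAB : {x | V x ≤ c} ⊆ A ∪ B) (hε : 0 < ε)
    (hε' : ε' < setDist A B) :
    ∃ η > 0, ∀ x ∈ K, infDist x A ∈ Icc ε ε' → c + η ≤ V x := by
  have hclosed : IsClosed {x | infDist x A ∈ Icc ε ε'} :=
    isClosed_Icc.preimage (continuous_infDist_pt A)
  obtain ⟨η, hη, hle⟩ := exists_pos_add_le_of_lowerSemicontinuousOn (hV.mono inter_subset_left)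
    (hK.inter_right hclosed) fun x hx ↦ lt_of_infDist_mem_Icc hAB hε hε' hx.2
  exact ⟨η, hη, fun x hxK hx ↦ hle x ⟨hxK, hx⟩⟩

end SetDist

section Action

variable {X : Type*} [PseudoMetricSpace X] {V : X → ℝ} {c : ℝ} {q : ℝ → X} {v : ℝ → ℝ}

/-- The curve `q` has speed at most `v`, in the sense of curves in metric spaces: increments of `q`
are bounded by integrals of `v`, whose local integrability is not part of the notion. For
`q ∈ H¹_loc` one takes `v = |q̇|`. -/
def HasSpeedLE (q : ℝ → X) (v : ℝ → ℝ) : Prop :=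
  ∀ a b, edist (q a) (q b) ≤ ∫⁻ t in uIcc a b, ENNReal.ofReal (v t)

/-- The action `I ↦ J_{c,I}(q)` of a curve `q` with speed `v`, as a measure on the time axis. Being
`[0,+∞]`-valued, it integrates the positive part of the Lagrangian. -/
def actionMeasure (V : X → ℝ) (c : ℝ) (q : ℝ → X) (v : ℝ → ℝ) : Measure ℝ :=
  volume.withDensity fun t ↦ ENNReal.ofReal (2⁻¹ * v t ^ 2 + (V (q t) - c))

lemma HasSpeedLE.sqrt_mul_edist_le_actionMeasure (hv : HasSpeedLE q v) {η : ℝ} (hη : 0 ≤ η)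
    {a b : ℝ} (hV : ∀ t ∈ uIcc a b, c + η ≤ V (q t)) :
    ENNReal.ofReal √(2 * η) * edist (q a) (q b) ≤ actionMeasure V c q v (uIcc a b) := by
  have hyoung : ∀ t ∈ uIcc a b, √(2 * η) * v t ≤ 2⁻¹ * v t ^ 2 + (V (q t) - c) := fun t ht ↦ by
    have hsq : √(2 * η) ^ 2 = 2 * η := Real.sq_sqrt (by positivity)
    linarith [hV t ht, two_mul_le_add_sq √(2 * η) (v t)]
  calc ENNReal.ofReal √(2 * η) * edist (q a) (q b)
      ≤ ENNReal.ofReal √(2 * η) * ∫⁻ t in uIcc a b, ENNReal.ofReal (v t) := by gcongr; exact hv a b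
    _ = ∫⁻ t in uIcc a b, ENNReal.ofReal (√(2 * η) * v t) := by
      simp only [ENNReal.ofReal_mul (Real.sqrt_nonneg _),
        lintegral_const_mul' _ _ ENNReal.ofReal_ne_top]
    _ ≤ ∫⁻ t in uIcc a b, ENNReal.ofReal (2⁻¹ * v t ^ 2 + (V (q t) - c)) :=
      setLIntegral_mono' measurableSet_uIcc fun t ht ↦ ENNReal.ofReal_le_ofReal (hyoung t ht)
    _ = actionMeasure V c q v (uIcc a b) := (withDensity_apply _ measurableSet_uIcc).symm

lemma HasSpeedLE.sqrt_mul_sub_infDist_le_actionMeasure (hv : HasSpeedLE q v) {η : ℝ} (hη : 0 ≤ η)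
    {a b : ℝ} (hV : ∀ t ∈ uIcc a b, c + η ≤ V (q t)) (A : Set X) :
    ENNReal.ofReal (√(2 * η) * (infDist (q b) A - infDist (q a) A)) ≤
      actionMeasure V c q v (uIcc a b) := by
  have hinf : infDist (q b) A - infDist (q a) A ≤ dist (q a) (q b) := by
    rw [sub_le_iff_le_add', dist_comm]
    exact infDist_le_infDist_add_dist
  grw [ENNReal.ofReal_mul (Real.sqrt_nonneg _), hinf, ← edist_dist]
  exact hv.sqrt_mul_edist_le_actionMeasure hη hV

end Action

section Primitive

variable {E : Type*} [NormedAddCommGroup E] [NormedSpace ℝ E] {q q' : ℝ → E}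

lemma continuous_of_sub_eq_integral (hq' : LocallyIntegrable q')
    (hq : ∀ a b, q b - q a = ∫ t in a..b, q' t) : Continuous q := by
  have hprim : q = fun b ↦ q 0 + ∫ t in (0 : ℝ)..b, q' t := funext fun b ↦ by
    rw [← hq, add_sub_cancel]
  rw [hprim]
  exact continuous_const.add (intervalIntegral.continuous_primitive
    (fun a b ↦ (hq'.integrableOn_isCompact isCompact_uIcc).intervalIntegrable) 0)

lemma hasSpeedLE_norm_of_sub_eq_integral (hq : ∀ a b, q b - q a = ∫ t in a..b, q' t) :
    HasSpeedLE q fun t ↦ ‖q' t‖ := fun a b ↦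
  calc edist (q a) (q b) = ‖∫ t in uIoc a b, q' t‖ₑ := by
        rw [edist_comm, edist_eq_enorm_sub, hq, ← ofReal_norm, ← ofReal_norm,
          intervalIntegral.norm_intervalIntegral_eq]
    _ ≤ ∫⁻ t in uIoc a b, ‖q' t‖ₑ := enorm_integral_le_lintegral_enorm _
    _ ≤ ∫⁻ t in uIcc a b, ‖q' t‖ₑ := lintegral_mono_set uIoc_subset_uIcc
    _ = ∫⁻ t in uIcc a b, ENNReal.ofReal ‖q' t‖ := by simp only [ofReal_norm]

end Primitive

lemma lagJ_eq_actionMeasure {N : ℕ} (V : Euc N → ℝ) (c : ℝ) (q q' : ℝ → Euc N) (I : Set ℝ) :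
    lagJ V c q q' I = actionMeasure V c q (fun t ↦ ‖q' t‖) I :=
  (withDensity_apply' _ I).symm

theorem limits_of_finite_action_general {X : Type*} [PseudoMetricSpace X] {V : X → ℝ} {c : ℝ}
    {A B K : Set X} (hK : IsCompact K) (hV : LowerSemicontinuousOn V K)
    (hAB : {x | V x ≤ c} ⊆ A ∪ B) (hsep : 0 < setDist A B)
    {q : ℝ → X} {v : ℝ → ℝ} (hq : Continuous q) (hv : HasSpeedLE q v)
    (hJ : actionMeasure V c q v univ < ∞) {l : Filter ℝ} [TendstoIxxClass Icc l l]
    (hl : l ≤ cocompact ℝ) (hqK : ∀ᶠ t in l, q t ∈ K)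
    (hfreq : ∀ ε > 0, ∃ᶠ t in l, infDist (q t) A < ε) :
    Tendsto (fun t ↦ infDist (q t) A) l (𝓝 0) := by
  have : IsFiniteMeasure (actionMeasure V c q v) := ⟨hJ⟩
  refine tendsto_order.2 ⟨fun ε hε ↦ .of_forall fun t ↦ hε.trans_le infDist_nonneg, fun ε hε ↦ ?_⟩
  obtain ⟨β, hβ, hβmin⟩ := exists_between (lt_min hε hsep)
  obtain ⟨hβε, hβsep⟩ := lt_min_iff.1 hβmin
  obtain ⟨α, hα, hαβ⟩ := exists_between hβ
  obtain ⟨η, hη, hle⟩ := exists_pos_add_le_of_infDist_mem_Icc hK hV hAB hα hβsep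
  have hκ : 0 < ENNReal.ofReal (√(2 * η) * (β - α)) := by simp [hη, hαβ]
  have hcross : ∀ a b, uIcc a b ⊆ {t | q t ∈ K} → infDist (q a) A = α → infDist (q b) A = β →
      MapsTo (fun t ↦ infDist (q t) A) (uIcc a b) (Icc α β) →
      ENNReal.ofReal (√(2 * η) * (β - α)) ≤ actionMeasure V c q v (uIcc a b) := by
    rintro a b hab rfl rfl hmaps
    exact hv.sqrt_mul_sub_infDist_le_actionMeasure hη.le (fun t ht ↦ hle _ (hab ht) (hmaps ht)) A
  have hlt : ∀ᶠ t in l, infDist (q t) A < β :=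
    eventually_lt_of_le_measure_crossing hl ((continuous_infDist_pt A).comp hq) hαβ.le hκ hqK
      hcross ((hfreq α hα).mono fun _ ↦ le_of_lt)
  exact hlt.mono fun _ ht ↦ ht.trans hβε

/-- Lemma 2.2: bounded finite-action elements of `Γ_c` approach `𝒱⁻` and `𝒱⁺` asymptotically. -/
theorem limits_of_finite_action {N : ℕ} (hN : 0 < N) (V : Euc N → ℝ) (hV : ContDiff ℝ 1 V)
    (c : ℝ) (Vm Vp : Set (Euc N)) (hVm : IsClosed Vm) (hVp : IsClosed Vp)
    (hsplit : {x | V x ≤ c} = Vm ∪ Vp) (hsep : 0 < setDist Vm Vp)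
    (q q' : ℝ → Euc N) (hq : (q, q') ∈ Gamma V c Vm Vp)
    (hbdd : ∃ M : ℝ, ∀ t, ‖q t‖ ≤ M)
    (hJ : lagJ V c q q' univ < ⊤) :
    Tendsto (fun t => infDist (q t) Vm) atBot (𝓝 0) ∧
    Tendsto (fun t => infDist (q t) Vp) atTop (𝓝 0) := by
  obtain ⟨⟨hq', -, hFTC⟩, -, hm, hp⟩ := hq
  obtain ⟨M, hM⟩ := hbdd
  rw [lagJ_eq_actionMeasure] at hJ
  have hqK (t : ℝ) : q t ∈ closedBall 0 M := mem_closedBall_zero_iff.2 (hM t)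
  have hqc : Continuous q := continuous_of_sub_eq_integral hq' hFTC
  have hv : HasSpeedLE q fun t ↦ ‖q' t‖ := hasSpeedLE_norm_of_sub_eq_integral hFTC
  have hVK := hV.continuous.lowerSemicontinuous.lowerSemicontinuousOn (closedBall 0 M)
  have hK : IsCompact (closedBall (0 : Euc N) M) := isCompact_closedBall 0 M
  exact ⟨limits_of_finite_action_general hK hVK hsplit.subset hsep hqc hv hJ atBot_le_cocompact
      (.of_forall hqK) hm,
    limits_of_finite_action_general hK hVK (hsplit.trans (union_comm _ _)).subset
      (setDist_comm Vm Vp ▸ hsep) hqc hv hJ atTop_le_cocompact (.of_forall hqK) hp⟩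
end
end
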